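/- Let D be a probability distribution on ℝ whose support is a bounded set of nonnegative reals containing at least two distinct values, and suppose that m_n, the expectation of the minimum of n i.i.d. draws from D, either is bounded away from zero or vanishes subexponentially (for every c > 0, e^{c n}·m_n → ∞ as n → ∞). Then there exists N such that for every n ≥ N the following holds: in divide-and-choose with n goods, with all values g^D_1,…,g^D_n, g^C_1,…,g^C_n i.i.d. from D, for any measurable divider strategy s : ℝ^n → [−1,1]^n that, for every realization of g^D, maximizes the divider's expected utility U over [−1,1]^n (the chooser picking her strictly preferred pile and breaking indifference in the divider's favor), the divider is ex ante strictly better off: the expectation of the divider's realized payoff strictly exceeds the expectation of the chooser's realized payoff. -/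

import Mathlib

open BigOperators MeasureTheory

/-- The probability, over the chooser's values drawn i.i.d. from `D`, that the chooser
strictly prefers pile 1 under the division `q`. -/
noncomputable def chooseProb (D : Measure ℝ) {n : ℕ} (q : Fin n → ℝ) : ℝ :=
  ((Measure.pi fun _ : Fin n => D) {x | 0 < ∑ i, q i * x i}).toReal

/-- The divider's expected utility from the division `q` when his values are `gD` and the
chooser's values are i.i.d. from `D`. -/
noncomputable def divUtility (D : Measure ℝ) {n : ℕ} (q gD : Fin n → ℝ) : ℝ :=
  chooseProb D q * ∑ i, ((1 - q i) / 2) * gD i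
    + (1 - chooseProb D q) * ∑ i, ((1 + q i) / 2) * gD i

/-- The chooser picks pile 1: either she strictly prefers it, or she is indifferent and the
divider weakly prefers pile 2 for himself (indifference is broken in the divider's favor). -/
def picksPile1 {n : ℕ} (q gD gC : Fin n → ℝ) : Prop :=
  0 < ∑ i, q i * gC i ∨ ((∑ i, q i * gC i) = 0 ∧ (∑ i, q i * gD i) < 0)

open Classical in
/-- The divider's realized payoff. -/
noncomputable def divPayoff {n : ℕ} (q gD gC : Fin n → ℝ) : ℝ :=
  if picksPile1 q gD gC then ∑ i, ((1 - q i) / 2) * gD i else ∑ i, ((1 + q i) / 2) * gD i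

open Classical in
/-- The chooser's realized payoff. -/
noncomputable def choPayoff {n : ℕ} (q gD gC : Fin n → ℝ) : ℝ :=
  if picksPile1 q gD gC then ∑ i, ((1 + q i) / 2) * gC i else ∑ i, ((1 - q i) / 2) * gC i

/-!
The piles of a division `q` differ in value, for the chooser, by a sum of independent terms with
mean `m * ∑ i, q i`, where `m` is the mean of `D`. By an `L¹` weak law of large numbers, uniform in
`q`, she takes pile 2 with probability close to `1` as soon as `∑ i, q i ≤ -(δ * n)`, and her
surplus, the expected absolute difference in value, is `m * |∑ i, q i| + o(n)`.

Giving a good of value `x` the weight `(x - m) / (x + m)` makes the sum of the weights negative of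
order `n` while pile 1 is worth more to the divider by order `n`, for all but a vanishing fraction
of his value vectors. So his optimal surplus is at least `κ * n`. By symmetry suppose that he
weakly prefers pile 1 of his optimal division. If `∑ i, q i ≥ -(δ * n)` with `δ` small, then the
surplus can only be positive if `∑ i, q i ≤ δ * n`, and the chooser's surplus is negligible
compared with `κ * n`. Otherwise shifting `q` slightly toward pile 1 hardly changes the chooser's
behavior, so optimality forces the divider to receive nearly everything he values already, while
pile 1 then contains so much that the chooser's surplus falls short of `m * n` by order `n`. In
both cases the divider is ahead by order `n`. The exceptional value vectors cost at most `m * n`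
times their vanishing probability.
-/

open Filter ProbabilityTheory
open scoped Topology

section WeakLaw

variable {Ω : Type*} {mΩ : MeasurableSpace Ω} {μ : Measure Ω}
  {ι : Type*} [Fintype ι] {ψ χ : Ω → ℝ} {q : ι → ℝ}

lemma exists_memLp_two_integral_abs_sub_le [IsFiniteMeasure μ] (hψ : Integrable ψ μ) {ε : ℝ}
    (hε : 0 < ε) : ∃ χ : Ω → ℝ, MemLp χ 2 μ ∧ ∫ y, |(ψ - χ) y| ∂μ ≤ ε := by
  obtain ⟨χ, hχε, hχ⟩ := (memLp_one_iff_integrable.2 hψ).exists_simpleFunc_eLpNorm_sub_lt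
    ENNReal.one_ne_top (ENNReal.ofReal_pos.2 hε).ne'
  refine ⟨χ, χ.memLp_of_isFiniteMeasure 2 μ, (ENNReal.ofReal_le_ofReal_iff hε.le).1 ?_⟩
  have hint : Integrable (ψ - ⇑χ) μ := hψ.sub (memLp_one_iff_integrable.1 hχ)
  rw [eLpNorm_one_eq_lintegral_enorm, ← ofReal_integral_norm_eq_lintegral_enorm hint] at hχε
  exact hχε.le

lemma abs_sum_mul_le_sum_abs {y : ι → ℝ} (hq : ∀ i, |q i| ≤ 1) :
    |∑ i, q i * y i| ≤ ∑ i, |y i| :=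
  (Finset.abs_sum_le_sum_abs _ _).trans <| Finset.sum_le_sum fun i _ => by
    rw [abs_mul]
    exact mul_le_of_le_one_left (abs_nonneg _) (hq i)

/-- The deviation from its mean of the weighted sum `∑ i, q i * ψ (x i)` of a statistic `ψ` of the
values `x i`, when these are i.i.d. from `μ`. -/
noncomputable def deviation {ι : Type*} [Fintype ι] (μ : Measure Ω) (ψ : Ω → ℝ) (q : ι → ℝ)
    (x : ι → Ω) : ℝ :=
  ∑ i, q i * ψ (x i) - (∑ i, q i) * ∫ y, ψ y ∂μ

lemma deviation_eq_add_deviation_sub (hψ : Integrable ψ μ) (hχ : Integrable χ μ) (q : ι → ℝ)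
    (x : ι → Ω) : deviation μ ψ q x = deviation μ χ q x + deviation μ (ψ - χ) q x := by
  simp only [deviation, Pi.sub_apply, integral_sub hψ hχ, mul_sub, Finset.sum_sub_distrib]
  ring

variable [IsProbabilityMeasure μ]

lemma integral_abs_sub_integral_le_sqrt_variance {X : Ω → ℝ} (hX : MemLp X 2 μ) :
    ∫ ω, |X ω - μ[X]| ∂μ ≤ √Var[X; μ] := by
  have hY : MemLp (fun ω => |X ω - μ[X]|) 2 μ := (hX.sub (memLp_const _)).abs
  have hsq : μ[(fun ω => |X ω - μ[X]|) ^ 2] = Var[X; μ] := by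
    simp [variance_eq_integral hX.aestronglyMeasurable.aemeasurable]
  refine Real.le_sqrt_of_sq_le ?_
  linarith [variance_eq_sub hY, variance_nonneg (fun ω => |X ω - μ[X]|) μ]

lemma integrable_sum_mul_eval (hψ : Integrable ψ μ) (q : ι → ℝ) :
    Integrable (fun x : ι → Ω => ∑ i, q i * ψ (x i)) (Measure.pi fun _ => μ) :=
  integrable_finsetSum _ fun i _ => (integrable_comp_eval hψ).const_mul (q i)

lemma integral_sum_mul_eval (hψ : Integrable ψ μ) (q : ι → ℝ) :
    ∫ x : ι → Ω, ∑ i, q i * ψ (x i) ∂(Measure.pi fun _ => μ) = (∑ i, q i) * ∫ y, ψ y ∂μ := by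
  rw [integral_finsetSum _ fun i _ => (integrable_comp_eval hψ).const_mul (q i), Finset.sum_mul]
  refine Finset.sum_congr rfl fun i _ => ?_
  rw [integral_const_mul, integral_comp_eval hψ.aestronglyMeasurable]

lemma integrable_sum_eval (hψ : Integrable ψ μ) :
    Integrable (fun x : ι → Ω => ∑ i, ψ (x i)) (Measure.pi fun _ => μ) := by
  simpa using integrable_sum_mul_eval hψ fun _ : ι => 1

lemma integral_sum_eval (hψ : Integrable ψ μ) :
    ∫ x : ι → Ω, ∑ i, ψ (x i) ∂(Measure.pi fun _ => μ) = Fintype.card ι * ∫ y, ψ y ∂μ := by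
  simpa using integral_sum_mul_eval hψ fun _ : ι => 1

lemma integrable_deviation (hψ : Integrable ψ μ) (q : ι → ℝ) :
    Integrable (deviation μ ψ q) (Measure.pi fun _ => μ) :=
  (integrable_sum_mul_eval hψ q).sub (integrable_const _)

lemma variance_sum_mul_eval_le (hψ : MemLp ψ 2 μ) (hq : ∀ i, |q i| ≤ 1) :
    Var[fun x : ι → Ω => ∑ i, q i * ψ (x i); Measure.pi fun _ => μ]
      ≤ Fintype.card ι * Var[ψ; μ] := by
  have hsum := variance_sum_pi (μ := fun _ : ι => μ) fun i => hψ.const_mul (q i)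
  simp only [variance_const_mul, Finset.sum_fn] at hsum
  rw [hsum, ← Finset.sum_mul]
  refine mul_le_mul_of_nonneg_right ?_ (variance_nonneg _ _)
  simpa using Finset.sum_le_card_nsmul Finset.univ _ 1 fun i _ =>
    (sq_le_one_iff_abs_le_one _).2 (hq i)

lemma integral_abs_deviation_le_sqrt (hψ : MemLp ψ 2 μ) (hq : ∀ i, |q i| ≤ 1) :
    ∫ x, |deviation μ ψ q x| ∂(Measure.pi fun _ => μ) ≤ √(Fintype.card ι * Var[ψ; μ]) := by
  have hX : MemLp (fun x : ι → Ω => ∑ i, q i * ψ (x i)) 2 (Measure.pi fun _ => μ) :=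
    memLp_finsetSum _ fun i _ =>
      (hψ.comp_measurePreserving (measurePreserving_eval (fun _ => μ) i)).const_mul (q i)
  have h := integral_abs_sub_integral_le_sqrt_variance hX
  rw [integral_sum_mul_eval (hψ.integrable one_le_two)] at h
  exact h.trans (Real.sqrt_le_sqrt (variance_sum_mul_eval_le hψ hq))

lemma integral_abs_deviation_le (hψ : Integrable ψ μ) (hq : ∀ i, |q i| ≤ 1) :
    ∫ x, |deviation μ ψ q x| ∂(Measure.pi fun _ => μ)
      ≤ 2 * (Fintype.card ι * ∫ y, |ψ y| ∂μ) := by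
  have hsum := integrable_sum_eval hψ.abs (ι := ι)
  have hmean : |(∑ i, q i) * ∫ y, ψ y ∂μ| ≤ Fintype.card ι * ∫ y, |ψ y| ∂μ := by
    rw [abs_mul]
    gcongr
    · simpa using abs_sum_mul_le_sum_abs (y := fun _ => 1) hq
    · exact abs_integral_le_integral_abs
  calc ∫ x, |deviation μ ψ q x| ∂(Measure.pi fun _ => μ)
      ≤ ∫ x : ι → Ω, (∑ i, |ψ (x i)| + |(∑ i, q i) * ∫ y, ψ y ∂μ|) ∂(Measure.pi fun _ => μ) :=
        integral_mono (integrable_deviation hψ q).abs (hsum.add (integrable_const _)) fun x =>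
          (abs_sub _ _).trans (add_le_add_left (abs_sum_mul_le_sum_abs hq) _)
    _ = Fintype.card ι * ∫ y, |ψ y| ∂μ + |(∑ i, q i) * ∫ y, ψ y ∂μ| := by
        rw [integral_add hsum (integrable_const _), integral_sum_eval hψ.abs]
        simp
    _ ≤ 2 * (Fintype.card ι * ∫ y, |ψ y| ∂μ) := by linarith

/-- The divisions `q ∈ [-1, 1]^n` of `n` goods; the fraction `(1 + q i) / 2` of good `i` goes to
pile 1. -/
def divisions (n : ℕ) : Set (Fin n → ℝ) :=
  {q | ∀ i, q i ∈ Set.Icc (-1 : ℝ) 1}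

lemma abs_le_one_of_mem_divisions {n : ℕ} {q : Fin n → ℝ} (hq : q ∈ divisions n) (i : Fin n) :
    |q i| ≤ 1 :=
  abs_le.2 (hq i)

lemma eventually_le_mul_natCast (C : ℝ) {ε : ℝ} (hε : 0 < ε) : ∀ᶠ n : ℕ in atTop, C ≤ ε * n :=
  (tendsto_natCast_atTop_atTop.const_mul_atTop hε).eventually_ge_atTop C

-- A square-integrable approximation of `ψ` reduces this to the variance bound.
lemma eventually_integral_abs_deviation_le (hψ : Integrable ψ μ) {ε : ℝ} (hε : 0 < ε) :
    ∀ᶠ n : ℕ in atTop, ∀ q ∈ divisions n,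
      ∫ x, |deviation μ ψ q x| ∂(Measure.pi fun _ => μ) ≤ ε * n := by
  obtain ⟨χ, hχ, hχψ⟩ := exists_memLp_two_integral_abs_sub_le hψ (by positivity : 0 < ε / 4)
  have hχ1 : Integrable χ μ := hχ.integrable one_le_two
  filter_upwards [eventually_le_mul_natCast (4 * Var[χ; μ] / ε) hε] with n hn q hq
  have hq := abs_le_one_of_mem_divisions hq
  have hsqrt : √(n * Var[χ; μ]) ≤ ε / 2 * n := by
    rw [div_le_iff₀ hε] at hn
    rw [Real.sqrt_le_left (by positivity)]
    nlinarith [(Nat.cast_nonneg n : (0 : ℝ) ≤ n)]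
  have happrox := integral_abs_deviation_le_sqrt hχ hq
  have herror := integral_abs_deviation_le (hψ.sub hχ1) hq
  rw [Fintype.card_fin] at happrox herror
  calc ∫ x, |deviation μ ψ q x| ∂(Measure.pi fun _ => μ)
      ≤ ∫ x, (|deviation μ χ q x| + |deviation μ (ψ - χ) q x|) ∂(Measure.pi fun _ => μ) :=
        integral_mono (integrable_deviation hψ q).abs
          ((integrable_deviation hχ1 q).abs.add (integrable_deviation (hψ.sub hχ1) q).abs)
          fun x => by
            rw [deviation_eq_add_deviation_sub hψ hχ1]
            exact abs_add_le _ _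
    _ = ∫ x, |deviation μ χ q x| ∂(Measure.pi fun _ => μ)
          + ∫ x, |deviation μ (ψ - χ) q x| ∂(Measure.pi fun _ => μ) :=
        integral_add (integrable_deviation hχ1 q).abs (integrable_deviation (hψ.sub hχ1) q).abs
    _ ≤ ε * n := by nlinarith [(Nat.cast_nonneg n : (0 : ℝ) ≤ n)]

lemma eventually_measureReal_abs_deviation_ge_le (hψ : Integrable ψ μ) {δ ε : ℝ} (hδ : 0 < δ)
    (hε : 0 < ε) :
    ∀ᶠ n : ℕ in atTop, ∀ q ∈ divisions n,
      (Measure.pi fun _ => μ).real {x | δ * n ≤ |deviation μ ψ q x|} ≤ ε := by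
  filter_upwards [eventually_integral_abs_deviation_le hψ (mul_pos hδ hε), eventually_gt_atTop 0]
    with n hn hn0 q hq
  have hδn : 0 < δ * n := by positivity
  refine le_of_mul_le_mul_left ?_ hδn
  calc δ * n * (Measure.pi fun _ => μ).real {x | δ * n ≤ |deviation μ ψ q x|}
      ≤ ∫ x, |deviation μ ψ q x| ∂(Measure.pi fun _ => μ) :=
        mul_meas_ge_le_integral_of_nonneg (ae_of_all _ fun x => abs_nonneg _)
          (integrable_deviation hψ q).abs _
    _ ≤ δ * ε * n := hn q hq
    _ = δ * n * ε := by ring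

end WeakLaw

section WithHighProbability

variable {Ω : Type*} {mΩ : MeasurableSpace Ω} {μ : Measure Ω} [IsProbabilityMeasure μ]

/-- The event `p n` about `n` i.i.d. draws from `μ` has probability tending to `1` as `n → ∞`.
The complementary events are required to have vanishing outer measure, so that no measurability
of `p n` is needed. -/
def WithHighProbability (μ : Measure Ω) (p : ∀ n : ℕ, (Fin n → Ω) → Prop) : Prop :=
  Tendsto (fun n => (Measure.pi fun _ : Fin n => μ).real {x | ¬ p n x}) atTop (𝓝 0)

namespace WithHighProbability

variable {p q : ∀ n : ℕ, (Fin n → Ω) → Prop}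

lemma mono (hp : WithHighProbability μ p) (h : ∀ᶠ n in atTop, ∀ x, p n x → q n x) :
    WithHighProbability μ q :=
  squeeze_zero' (Eventually.of_forall fun _ => measureReal_nonneg)
    (h.mono fun n hn => measureReal_mono fun x hq hp => hq (hn x hp)) hp

lemma and (hp : WithHighProbability μ p) (hq : WithHighProbability μ q) :
    WithHighProbability μ fun n x => p n x ∧ q n x := by
  refine squeeze_zero (fun _ => measureReal_nonneg) (fun n => ?_) (by simpa using hp.add hq)
  exact (measureReal_mono fun x hx => not_and_or.1 hx).trans (measureReal_union_le _ _)

lemma of_ae {r : Ω → Prop} (h : ∀ᵐ y ∂μ, r y) : WithHighProbability μ fun _ x => ∀ i, r (x i) := by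
  have h0 (n : ℕ) : (Measure.pi fun _ : Fin n => μ).real {x | ¬ ∀ i, r (x i)} = 0 :=
    (measureReal_eq_zero_iff).2 <| ae_iff.1 <|
      ae_all_iff.2 fun _ => Measure.tendsto_eval_ae_ae.eventually h
  simp only [WithHighProbability, h0, tendsto_const_nhds_iff]

lemma abs_sum_sub_le {ψ : Ω → ℝ} (hψ : Integrable ψ μ) {ε : ℝ} (hε : 0 < ε) :
    WithHighProbability μ fun n x => |∑ i, ψ (x i) - n * ∫ y, ψ y ∂μ| ≤ ε * n := by
  refine tendsto_order.2 ⟨fun a ha => Eventually.of_forall fun n => ha.trans_le measureReal_nonneg,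
    fun a ha => ?_⟩
  filter_upwards [eventually_measureReal_abs_deviation_ge_le hψ hε (half_pos ha)] with n hn
  refine lt_of_le_of_lt ((measureReal_mono fun x hx => ?_).trans
    (hn (fun _ => 1) fun _ => by norm_num)) (half_lt_self ha)
  simpa [deviation] using (not_le.1 hx).le

end WithHighProbability

end WithHighProbability

section Chooser

variable {D : Measure ℝ} {n : ℕ}

lemma measurableSet_sum_mul_pos (q : Fin n → ℝ) :
    MeasurableSet {x : Fin n → ℝ | 0 < ∑ i, q i * x i} :=
  measurableSet_lt measurable_const (by fun_prop)

lemma chooseProb_nonneg (q : Fin n → ℝ) : 0 ≤ chooseProb D q :=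
  ENNReal.toReal_nonneg

variable [IsProbabilityMeasure D]

lemma chooseProb_add_chooseProb_neg_le_one (q : Fin n → ℝ) :
    chooseProb D q + chooseProb D (-q) ≤ 1 := by
  have hdisj : Disjoint {x : Fin n → ℝ | 0 < ∑ i, q i * x i} {x | 0 < ∑ i, (-q) i * x i} := by
    refine Set.disjoint_left.2 fun x hx hx' => ?_
    simp only [Set.mem_ofPred_eq, Pi.neg_apply, neg_mul, Finset.sum_neg_distrib] at hx hx'
    linarith
  exact (measureReal_union hdisj (measurableSet_sum_mul_pos _)).symm.trans_le measureReal_le_one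

lemma eventually_chooseProb_le (hD : Integrable (fun y => y) D) (hm : 0 < ∫ y, y ∂D) {δ ε : ℝ}
    (hδ : 0 < δ) (hε : 0 < ε) :
    ∀ᶠ n : ℕ in atTop, ∀ q ∈ divisions n, ∑ i, q i ≤ -(δ * n) → chooseProb D q ≤ ε := by
  filter_upwards [eventually_measureReal_abs_deviation_ge_le hD (mul_pos hδ hm) hε]
    with n hn q hq hsum
  refine (measureReal_mono fun x hx => ?_).trans (hn q hq)
  have hx : 0 < ∑ i, q i * x i := hx
  change δ * (∫ y, y ∂D) * n ≤ |∑ i, q i * x i - (∑ i, q i) * ∫ y, y ∂D|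
  exact le_abs.2 (.inl (by nlinarith))

lemma eventually_one_sub_le_chooseProb (hD : Integrable (fun y => y) D) (hm : 0 < ∫ y, y ∂D)
    {δ ε : ℝ} (hδ : 0 < δ) (hε : 0 < ε) :
    ∀ᶠ n : ℕ in atTop, ∀ q ∈ divisions n, δ * n ≤ ∑ i, q i → 1 - ε ≤ chooseProb D q := by
  filter_upwards [eventually_measureReal_abs_deviation_ge_le hD (mul_pos hδ hm) hε]
    with n hn q hq hsum
  have hcompl := probReal_compl_eq_one_sub (μ := Measure.pi fun _ : Fin n => D)
    (measurableSet_sum_mul_pos q)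
  have hle : (Measure.pi fun _ : Fin n => D).real {x | 0 < ∑ i, q i * x i}ᶜ ≤ ε := by
    refine (measureReal_mono fun x hx => ?_).trans (hn q hq)
    have hx : ∑ i, q i * x i ≤ 0 := not_lt.1 hx
    change δ * (∫ y, y ∂D) * n ≤ |∑ i, q i * x i - (∑ i, q i) * ∫ y, y ∂D|
    exact le_abs.2 (.inr (by nlinarith))
  have hP : chooseProb D q = (Measure.pi fun _ : Fin n => D).real {x | 0 < ∑ i, q i * x i} := rfl
  linarith

lemma eventually_integral_abs_sum_mul_le (hD : Integrable (fun y => y) D) {ε : ℝ} (hε : 0 < ε) :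
    ∀ᶠ n : ℕ in atTop, ∀ q ∈ divisions n,
      ∫ x, |∑ i, q i * x i| ∂(Measure.pi fun _ : Fin n => D)
        ≤ |∑ i, q i| * |∫ y, y ∂D| + ε * n := by
  filter_upwards [eventually_integral_abs_deviation_le hD hε] with n hn q hq
  calc ∫ x, |∑ i, q i * x i| ∂(Measure.pi fun _ : Fin n => D)
      ≤ ∫ x, (|(∑ i, q i) * ∫ y, y ∂D| + |deviation D (fun y => y) q x|)
          ∂(Measure.pi fun _ : Fin n => D) :=
        integral_mono (integrable_sum_mul_eval hD q).abs
          ((integrable_const _).add (integrable_deviation hD q).abs) fun x => by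
            simpa [deviation] using
              abs_add_le ((∑ i, q i) * ∫ y, y ∂D) (deviation D (fun y => y) q x)
    _ = |∑ i, q i| * |∫ y, y ∂D| + ∫ x, |deviation D (fun y => y) q x|
          ∂(Measure.pi fun _ : Fin n => D) := by
        rw [integral_add (integrable_const _) (integrable_deviation hD q).abs, ← abs_mul]
        simp
    _ ≤ |∑ i, q i| * |∫ y, y ∂D| + ε * n := by grw [hn q hq]

end Chooser

section Optimality

variable {D : Measure ℝ} {n : ℕ} {q g : Fin n → ℝ}

/-- The expected value, to a divider with values `g`, of the pile left to him under the division `q`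
minus that of the pile picked by the chooser. -/
noncomputable def surplus (D : Measure ℝ) {n : ℕ} (q g : Fin n → ℝ) : ℝ :=
  (∑ i, q i * g i) * (1 - 2 * chooseProb D q)

/-- The divider's surplus minus the corresponding quantity for the chooser: she always takes the
better pile, so her surplus is the expected absolute difference in value between the piles. -/
noncomputable def advantage (D : Measure ℝ) {n : ℕ} (q g : Fin n → ℝ) : ℝ :=
  surplus D q g - ∫ x, |∑ i, q i * x i| ∂(Measure.pi fun _ : Fin n => D)

lemma sum_one_add_div_two_mul (q g : Fin n → ℝ) :
    ∑ i, (1 + q i) / 2 * g i = (∑ i, g i + ∑ i, q i * g i) / 2 := by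
  rw [← Finset.sum_add_distrib, Finset.sum_div]
  exact Finset.sum_congr rfl fun i _ => by ring

lemma sum_one_sub_div_two_mul (q g : Fin n → ℝ) :
    ∑ i, (1 - q i) / 2 * g i = (∑ i, g i - ∑ i, q i * g i) / 2 := by
  rw [← Finset.sum_sub_distrib, Finset.sum_div]
  exact Finset.sum_congr rfl fun i _ => by ring

lemma divUtility_eq_sum_add_surplus_div_two (q g : Fin n → ℝ) :
    divUtility D q g = (∑ i, g i + surplus D q g) / 2 := by
  rw [divUtility, sum_one_add_div_two_mul, sum_one_sub_div_two_mul, surplus]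
  ring

lemma neg_mem_divisions (hq : q ∈ divisions n) : -q ∈ divisions n := fun i =>
  ⟨neg_le_neg (hq i).2, neg_le.1 (hq i).1⟩

lemma add_mul_one_sub_mem_divisions (hq : q ∈ divisions n) {t : ℝ} (ht0 : 0 ≤ t) (ht1 : t ≤ 1) :
    (fun i => q i + t * (1 - q i)) ∈ divisions n := fun i => by
  obtain ⟨h1, h2⟩ := hq i
  constructor <;> nlinarith

lemma sum_neg_mul (q g : Fin n → ℝ) : ∑ i, (-q) i * g i = -∑ i, q i * g i := by
  simp

lemma surplus_le_sum_mul (hqg : 0 ≤ ∑ i, q i * g i) : surplus D q g ≤ ∑ i, q i * g i :=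
  mul_le_of_le_one_right hqg (by linarith [chooseProb_nonneg (D := D) q])

lemma sum_mul_le_sum (hq : q ∈ divisions n) (hg : ∀ i, 0 ≤ g i) : ∑ i, q i * g i ≤ ∑ i, g i :=
  Finset.sum_le_sum fun i _ => mul_le_of_le_one_left (hg i) (hq i).2

lemma surplus_nonneg_of_isMaxOn (hopt : IsMaxOn (surplus D · g) (divisions n) q) :
    0 ≤ surplus D q g := by
  simpa [surplus] using isMaxOn_iff.1 hopt 0 fun _ => by norm_num

lemma le_surplus_of_isMaxOn_of_chooseProb_le (hq : q ∈ divisions n)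
    (hopt : IsMaxOn (surplus D · g) (divisions n) q) (hqg : 0 ≤ ∑ i, q i * g i)
    (hg : ∀ i, 0 ≤ g i) {t ε : ℝ} (ht0 : 0 < t) (ht1 : t ≤ 1)
    (hP : chooseProb D (fun i => q i + t * (1 - q i)) ≤ ε * t / 2) :
    (1 - ε) * ∑ i, g i ≤ surplus D q g := by
  set r : Fin n → ℝ := fun i => q i + t * (1 - q i) with hr
  have hr_mem : r ∈ divisions n := add_mul_one_sub_mem_divisions hq ht0.le ht1
  have hrg : ∑ i, r i * g i = (1 - t) * ∑ i, q i * g i + t * ∑ i, g i := by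
    rw [Finset.mul_sum, Finset.mul_sum, ← Finset.sum_add_distrib]
    exact Finset.sum_congr rfl fun i _ => by rw [hr]; ring
  refine le_of_mul_le_mul_left ?_ ht0
  have hloss : 2 * chooseProb D r * ∑ i, r i * g i ≤ ε * t * ∑ i, g i := by
    have hT : 0 ≤ ∑ i, g i := Finset.sum_nonneg fun i _ => hg i
    have h1 := mul_le_mul_of_nonneg_left (sum_mul_le_sum hr_mem hg) (chooseProb_nonneg (D := D) r)
    nlinarith
  have hshift : (1 - t) * surplus D q g + t * ∑ i, g i - ε * t * ∑ i, g i ≤ surplus D q g :=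
    calc (1 - t) * surplus D q g + t * ∑ i, g i - ε * t * ∑ i, g i
        ≤ (1 - t) * ∑ i, q i * g i + t * ∑ i, g i - 2 * chooseProb D r * ∑ i, r i * g i := by
          have := sub_nonneg.2 ht1
          grw [surplus_le_sum_mul hqg, hloss]
      _ = surplus D r g := by rw [← hrg, surplus]; ring
      _ ≤ surplus D q g := isMaxOn_iff.1 hopt r hr_mem
  linarith

lemma advantage_neg_le_of_isMaxOn (hq : q ∈ divisions n)
    (hopt : IsMaxOn (surplus D · g) (divisions n) q) : advantage D (-q) g ≤ advantage D q g := by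
  simp only [advantage, sum_neg_mul, abs_neg]
  grw [isMaxOn_iff.1 hopt (-q) (neg_mem_divisions hq)]

variable [IsProbabilityMeasure D]

lemma surplus_le_surplus_neg (hqg : ∑ i, q i * g i ≤ 0) : surplus D q g ≤ surplus D (-q) g := by
  unfold surplus
  rw [sum_neg_mul]
  nlinarith [chooseProb_add_chooseProb_neg_le_one (D := D) q]

lemma isMaxOn_surplus_neg (hopt : IsMaxOn (surplus D · g) (divisions n) q)
    (hqg : ∑ i, q i * g i ≤ 0) : IsMaxOn (surplus D · g) (divisions n) (-q) :=
  fun r hr => (isMaxOn_iff.1 hopt r hr).trans (surplus_le_surplus_neg hqg)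

lemma integral_abs_sum_mul_le (hD : Integrable (fun y => y) D) (hnonneg : ∀ᵐ y ∂D, 0 ≤ y)
    (hq : q ∈ divisions n) :
    ∫ x, |∑ i, q i * x i| ∂(Measure.pi fun _ : Fin n => D) ≤ n * ∫ y, y ∂D :=
  calc ∫ x, |∑ i, q i * x i| ∂(Measure.pi fun _ : Fin n => D)
      ≤ ∫ x, ∑ i, |x i| ∂(Measure.pi fun _ : Fin n => D) :=
        integral_mono (integrable_sum_mul_eval hD q).abs (integrable_sum_eval hD.abs) fun _ =>
          abs_sum_mul_le_sum_abs (abs_le_one_of_mem_divisions hq)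
    _ = n * ∫ y, |y| ∂D := by rw [integral_sum_eval hD.abs, Fintype.card_fin]
    _ = n * ∫ y, y ∂D := by rw [integral_congr_ae (hnonneg.mono fun _ => abs_of_nonneg)]

lemma neg_le_advantage_of_isMaxOn (hD : Integrable (fun y => y) D) (hnonneg : ∀ᵐ y ∂D, 0 ≤ y)
    (hq : q ∈ divisions n) (hopt : IsMaxOn (surplus D · g) (divisions n) q) :
    -(n * ∫ y, y ∂D) ≤ advantage D q g := by
  have := surplus_nonneg_of_isMaxOn hopt
  have := integral_abs_sum_mul_le hD hnonneg hq
  unfold advantage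
  linarith

end Optimality

section Tilt

/-- The division rule giving a good of value `x` the weight `(x - m) / (x + m)`, where `m` is the
mean of the distribution of values: pile 1 is worth more than pile 2 to the divider, while the
weights sum to a negative number, so that most choosers prefer pile 2. -/
noncomputable def tilt (m x : ℝ) : ℝ := (x - m) / (x + m)

variable {m x : ℝ}

lemma tilt_mem_Icc (hm : 0 < m) (hx : 0 ≤ x) : tilt m x ∈ Set.Icc (-1 : ℝ) 1 := by
  have : 0 < x + m := by positivity
  rw [tilt, Set.mem_Icc, le_div_iff₀ this, div_le_one this]
  constructor <;> linarith

lemma tilt_mul_self (hm : 0 < m) (hx : 0 ≤ x) : tilt m x * x = x - m - m * tilt m x := by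
  have : x + m ≠ 0 := by positivity
  rw [tilt]
  field_simp
  ring

lemma one_add_tilt (hm : 0 < m) (hx : 0 ≤ x) : 1 + tilt m x = 2 * x / (x + m) := by
  have : x + m ≠ 0 := by positivity
  rw [tilt]
  field_simp
  ring

lemma sub_div_two_mul_sub_tilt (hm : 0 < m) (hx : 0 ≤ x) :
    (x - m) / (2 * m) - tilt m x = (x - m) ^ 2 / (2 * m * (x + m)) := by
  have : x + m ≠ 0 := by positivity
  rw [tilt]
  field_simp
  ring

lemma mul_tilt_sub_le (hm : 0 < m) (hx : 0 ≤ x) {t : ℝ} (ht : t ∈ Set.Icc (-1 : ℝ) 1) :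
    m * (tilt m x - t) ≤ (1 - t) * x := by
  have hgap : (1 - t) * x - m * (tilt m x - t)
      = (x + m) / 2 * ((t - tilt m x) ^ 2 + (1 - t ^ 2)) := by
    have : x + m ≠ 0 := by positivity
    rw [tilt]
    field_simp
    ring
  have ht2 : 0 ≤ 1 - t ^ 2 := by nlinarith [ht.1, ht.2]
  have : 0 ≤ (x + m) / 2 * ((t - tilt m x) ^ 2 + (1 - t ^ 2)) := by positivity
  linarith

lemma sum_tilt_mul_self (hm : 0 < m) {n : ℕ} {g : Fin n → ℝ} (hg : ∀ i, 0 ≤ g i) :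
    ∑ i, tilt m (g i) * g i = ∑ i, g i - n * m - m * ∑ i, tilt m (g i) := by
  simp [fun i => tilt_mul_self hm (hg i), Finset.sum_sub_distrib, Finset.mul_sum]

variable {D : Measure ℝ} [IsProbabilityMeasure D]

lemma integrable_tilt (hm : 0 < m) (hnonneg : ∀ᵐ y ∂D, 0 ≤ y) : Integrable (tilt m) D :=
  Integrable.of_bound (C := 1)
    ((measurable_id.sub_const m).div (measurable_id.add_const m)).aestronglyMeasurable <|
    hnonneg.mono fun _ hy => abs_le.2 (tilt_mem_Icc hm hy)

lemma integral_pos_of_ae_eq_zero_imp_eq {f : ℝ → ℝ} (hf : Integrable f D) (hf0 : 0 ≤ᵐ[D] f)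
    {c : ℝ} (hc : D {c} ≠ 1) (hfc : ∀ᵐ y ∂D, f y = 0 → y = c) : 0 < ∫ y, f y ∂D := by
  refine (integral_nonneg_of_ae hf0).lt_of_ne fun h => hc ?_
  rw [← mem_ae_iff_prob_eq_one (measurableSet_singleton c)]
  filter_upwards [(integral_eq_zero_iff_of_nonneg_ae hf0 hf).1 h.symm, hfc] with y hy hyc
  exact hyc hy

lemma integral_pos_of_nonneg (hD : Integrable (fun y => y) D) (hnonneg : ∀ᵐ y ∂D, 0 ≤ y)
    (hne : D {0} ≠ 1) : 0 < ∫ y, y ∂D :=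
  integral_pos_of_ae_eq_zero_imp_eq hD hnonneg hne (ae_of_all _ fun _ => id)

lemma integral_tilt_neg (hD : Integrable (fun y => y) D) (hnonneg : ∀ᵐ y ∂D, 0 ≤ y)
    (hm : 0 < ∫ y, y ∂D) (hne : D {∫ y, y ∂D} ≠ 1) : ∫ y, tilt (∫ x, x ∂D) y ∂D < 0 := by
  set m := ∫ y, y ∂D with hm_def
  have hlin : Integrable (fun y => (y - m) / (2 * m)) D :=
    (hD.sub (integrable_const m)).div_const _
  have hgap : 0 < ∫ y, ((y - m) / (2 * m) - tilt m y) ∂D := by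
    refine integral_pos_of_ae_eq_zero_imp_eq (hlin.sub (integrable_tilt hm hnonneg)) ?_ hne ?_ <;>
      filter_upwards [hnonneg] with y hy
    · simp only [Pi.zero_apply, sub_div_two_mul_sub_tilt hm hy]
      positivity
    · rw [sub_div_two_mul_sub_tilt hm hy, div_eq_zero_iff, sq_eq_zero_iff, sub_eq_zero]
      rintro (h | h)
      · exact h
      · nlinarith
  have hzero : ∫ y, (y - m) / (2 * m) ∂D = 0 := by
    rw [integral_div, integral_sub hD (integrable_const m), ← hm_def]
    simp
  rw [integral_sub hlin (integrable_tilt hm hnonneg), hzero] at hgap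
  linarith

lemma neg_one_lt_integral_tilt (hnonneg : ∀ᵐ y ∂D, 0 ≤ y) (hne : D {0} ≠ 1) (hm : 0 < m) :
    -1 < ∫ y, tilt m y ∂D := by
  have hpos : 0 < ∫ y, (1 + tilt m y) ∂D := by
    refine integral_pos_of_ae_eq_zero_imp_eq
      ((integrable_const 1).add (integrable_tilt hm hnonneg)) ?_ hne ?_ <;>
      filter_upwards [hnonneg] with y hy
    · simp only [Pi.zero_apply, one_add_tilt hm hy]
      positivity
    · rw [one_add_tilt hm hy, div_eq_zero_iff]
      rintro (h | h) <;> linarith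
  rw [integral_add (integrable_const 1) (integrable_tilt hm hnonneg)] at hpos
  simp only [integral_const, probReal_univ, one_smul] at hpos
  linarith

end Tilt

section ManyGoods

variable {D : Measure ℝ} [IsProbabilityMeasure D]

lemma eventually_surplus_nonpos (hD : Integrable (fun y => y) D) (hm : 0 < ∫ y, y ∂D) {δ : ℝ}
    (hδ : 0 < δ) :
    ∀ᶠ n : ℕ in atTop, ∀ q ∈ divisions n, ∀ g : Fin n → ℝ, δ * n ≤ ∑ i, q i →
      0 ≤ ∑ i, q i * g i → surplus D q g ≤ 0 := by
  filter_upwards [eventually_one_sub_le_chooseProb hD hm hδ one_half_pos] with n hn q hq g hsum hqg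
  exact mul_nonpos_of_nonneg_of_nonpos hqg (by linarith [hn q hq hsum])

lemma eventually_half_le_surplus (hD : Integrable (fun y => y) D) (hm : 0 < ∫ y, y ∂D) {δ : ℝ}
    (hδ : 0 < δ) :
    ∀ᶠ n : ℕ in atTop, ∀ q ∈ divisions n, ∀ g : Fin n → ℝ, ∑ i, q i ≤ -(δ * n) →
      0 ≤ ∑ i, q i * g i → (∑ i, q i * g i) / 2 ≤ surplus D q g := by
  filter_upwards [eventually_chooseProb_le hD hm hδ (by norm_num : (0 : ℝ) < 1 / 4)]
    with n hn q hq g hsum hqg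
  unfold surplus
  nlinarith [hn q hq hsum]

lemma exists_withHighProbability_le_surplus (hD : Integrable (fun y => y) D)
    (hnonneg : ∀ᵐ y ∂D, 0 ≤ y) (hm : 0 < ∫ y, y ∂D) (hne : D {∫ y, y ∂D} ≠ 1) :
    ∃ κ > 0, WithHighProbability D fun n g => ∃ r ∈ divisions n, κ * n ≤ surplus D r g := by
  have hτ := integral_tilt_neg hD hnonneg hm hne
  set m := ∫ y, y ∂D with hm_def
  set γ := -∫ y, tilt m y ∂D
  have hγ : 0 < γ := neg_pos.2 hτ
  set ε := m * γ / (2 * (1 + m)) with hε_def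
  have hε : 0 < ε := by positivity
  have hεm : ε * (1 + m) = m * γ / 2 := by rw [hε_def]; field_simp
  have hεγ : ε ≤ γ / 2 := by
    rw [hε_def, div_le_iff₀ (by positivity)]
    nlinarith
  refine ⟨m * γ / 4, by positivity, ((WithHighProbability.of_ae hnonneg).and
    ((WithHighProbability.abs_sum_sub_le hD hε).and
      (WithHighProbability.abs_sum_sub_le (integrable_tilt hm hnonneg) hε))).mono ?_⟩
  filter_upwards [eventually_half_le_surplus hD hm (half_pos hγ)] with n hn g ⟨hg, hsum, htilt⟩
  rw [← hm_def, abs_le] at hsum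
  rw [abs_le] at htilt
  have hεγn : ε * n ≤ γ / 2 * n := by gcongr
  have hweights : ∑ i, tilt m (g i) ≤ -(γ * n) + ε * n := by linarith [htilt.2]
  have hvalue : m * γ / 2 * n ≤ ∑ i, tilt m (g i) * g i := by
    have hεmn : ε * (1 + m) * n = m * γ / 2 * n := by rw [hεm]
    rw [sum_tilt_mul_self hm hg]
    linarith [hsum.1, mul_le_mul_of_nonneg_left hweights hm.le]
  refine ⟨fun i => tilt m (g i), fun i => tilt_mem_Icc hm (hg i), ?_⟩
  have hvalue0 : 0 ≤ ∑ i, tilt m (g i) * g i := le_trans (by positivity) hvalue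
  linarith [hn _ (fun i => tilt_mem_Icc hm (hg i)) g (by linarith) hvalue0]

-- Shifting `q` slightly toward pile 1 still leaves pile 2 to almost every chooser.
lemma eventually_le_surplus_of_isMaxOn (hD : Integrable (fun y => y) D) (hm : 0 < ∫ y, y ∂D)
    {δ ε : ℝ} (hδ : 0 < δ) (hδ4 : δ ≤ 1 / 4) (hε : 0 < ε) :
    ∀ᶠ n : ℕ in atTop, ∀ q ∈ divisions n, ∀ g : Fin n → ℝ, (∀ i, 0 ≤ g i) →
      IsMaxOn (surplus D · g) (divisions n) q → 0 ≤ ∑ i, q i * g i → ∑ i, q i ≤ -(2 * δ * n) →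
      (1 - ε) * ∑ i, g i ≤ surplus D q g := by
  filter_upwards [eventually_chooseProb_le hD hm (half_pos hδ) (by positivity : 0 < ε * δ / 2)]
    with n hn q hq g hg hopt hqg hsum
  have hδ1 : δ ≤ 1 := by linarith
  refine le_surplus_of_isMaxOn_of_chooseProb_le hq hopt hqg hg hδ hδ1
    (hn _ (add_mul_one_sub_mem_divisions hq hδ.le hδ1) ?_)
  calc ∑ i, (q i + δ * (1 - q i)) = (1 - δ) * ∑ i, q i + δ * n := by
        simp [Finset.sum_add_distrib, ← Finset.mul_sum]
        ring
    _ ≤ (1 - δ) * -(2 * δ * n) + δ * n := by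
        have := sub_nonneg.2 hδ1
        gcongr
    _ = -(δ * n) * (1 - 2 * δ) := by ring
    _ ≤ -(δ * n) * (1 / 2) :=
        mul_le_mul_of_nonpos_left (by linarith) (neg_nonpos.2 (by positivity))
    _ = -(δ / 2 * n) := by ring

lemma neg_mul_sum_le {n : ℕ} {q g : Fin n → ℝ} {m : ℝ} (hm : 0 < m) (hq : q ∈ divisions n)
    (hg : ∀ i, 0 ≤ g i) :
    -(m * ∑ i, q i) ≤ ∑ i, g i - ∑ i, q i * g i - m * ∑ i, tilt m (g i) := by
  have := Finset.sum_le_sum fun i (_ : i ∈ Finset.univ) => mul_tilt_sub_le hm (hg i) (hq i)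
  simp only [← Finset.mul_sum, Finset.sum_sub_distrib, sub_mul, one_mul] at this
  linarith

lemma exists_withHighProbability_le_advantage_of_sum_le (hD : Integrable (fun y => y) D)
    (hnonneg : ∀ᵐ y ∂D, 0 ≤ y) (hne : D {0} ≠ 1) :
    ∃ c > 0, ∀ δ > 0, δ ≤ 1 / 4 → WithHighProbability D fun n g => ∀ q ∈ divisions n,
      IsMaxOn (surplus D · g) (divisions n) q → 0 ≤ ∑ i, q i * g i → ∑ i, q i ≤ -(2 * δ * n) →
      c * n ≤ advantage D q g := by
  have hm := integral_pos_of_nonneg hD hnonneg hne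
  set m := ∫ y, y ∂D with hm_def
  set τ := ∫ y, tilt m y ∂D with hτ_def
  have hτ : 0 < 1 + τ := by linarith [neg_one_lt_integral_tilt hnonneg hne hm]
  set ε := m * (1 + τ) / (2 * (4 + m)) with hε_def
  have hε : 0 < ε := by positivity
  have hεm : ε * (4 + m) = m * (1 + τ) / 2 := by rw [hε_def]; field_simp
  refine ⟨m * (1 + τ) / 2, by positivity, fun δ hδ hδ4 => ((WithHighProbability.of_ae hnonneg).and
    ((WithHighProbability.abs_sum_sub_le hD hε).and
      (WithHighProbability.abs_sum_sub_le (integrable_tilt hm hnonneg) hε))).mono ?_⟩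
  filter_upwards [eventually_le_surplus_of_isMaxOn hD hm hδ hδ4
      (by positivity : 0 < ε / (m + ε)), eventually_integral_abs_sum_mul_le hD hε]
    with n hsurplus hchooser g ⟨hg, hsum, htilt⟩ q hq hopt hqg hqsum
  rw [← hm_def, abs_le] at hsum
  rw [← hτ_def, abs_le] at htilt
  have hT : ε / (m + ε) * ∑ i, g i ≤ ε * n := by
    rw [div_mul_eq_mul_div, div_le_iff₀ (by positivity), mul_assoc]
    gcongr
    linarith [hsum.2]
  have hs := hsurplus q hq g hg hopt hqg hqsum
  have hle := surplus_le_sum_mul (D := D) hqg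
  have hpile := neg_mul_sum_le hm hq hg
  have hchooser := hchooser q hq
  have hqsum0 : ∑ i, q i ≤ 0 := hqsum.trans (neg_nonpos.2 (by positivity))
  rw [← hm_def, abs_of_pos hm, abs_of_nonpos hqsum0] at hchooser
  have hmtilt := mul_le_mul_of_nonneg_left htilt.1 hm.le
  have hεmn : ε * (4 + m) * n = m * (1 + τ) / 2 * n := by rw [hεm]
  unfold advantage
  linarith [hsum.1]

lemma eventually_surplus_sub_le_advantage (hD : Integrable (fun y => y) D) (hm : 0 < ∫ y, y ∂D)
    {ε : ℝ} (hε : 0 < ε) :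
    ∀ᶠ n : ℕ in atTop, ∀ q ∈ divisions n, ∀ g : Fin n → ℝ, ∀ δ : ℝ, |∑ i, q i| ≤ δ * n →
      surplus D q g - (δ * (∫ y, y ∂D) + ε) * n ≤ advantage D q g := by
  filter_upwards [eventually_integral_abs_sum_mul_le hD hε] with n hn q hq g δ hsum
  have := hn q hq
  rw [abs_of_pos hm] at this
  unfold advantage
  linarith [mul_le_mul_of_nonneg_right hsum hm.le]

lemma exists_withHighProbability_le_advantage (hD : Integrable (fun y => y) D)
    (hnonneg : ∀ᵐ y ∂D, 0 ≤ y) (htwo : ∀ c, D {c} ≠ 1) :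
    ∃ c > 0, WithHighProbability D fun n g => ∀ q ∈ divisions n,
      IsMaxOn (surplus D · g) (divisions n) q → c * n ≤ advantage D q g := by
  have hm := integral_pos_of_nonneg hD hnonneg (htwo 0)
  obtain ⟨κ, hκ, hlarge⟩ := exists_withHighProbability_le_surplus hD hnonneg hm (htwo _)
  obtain ⟨c, hc, hunbalanced⟩ :=
    exists_withHighProbability_le_advantage_of_sum_le hD hnonneg (htwo 0)
  set m := ∫ y, y ∂D
  set δ := min (1 / 4) (κ / (8 * m))
  have hδ : 0 < δ := by positivity
  have hδκ : 2 * δ * m ≤ κ / 4 := by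
    have := (le_div_iff₀ (by positivity)).1 (min_le_right (1 / 4) (κ / (8 * m)))
    linarith
  refine ⟨min c (κ / 2), by positivity,
    (hlarge.and (hunbalanced δ hδ (min_le_left _ _))).mono ?_⟩
  filter_upwards [eventually_surplus_nonpos hD hm (by positivity : 0 < 2 * δ),
    eventually_surplus_sub_le_advantage hD hm (by positivity : 0 < κ / 4), eventually_gt_atTop 0]
    with n hover hbalanced hn g ⟨⟨r, hr, hrκ⟩, hunbalanced⟩ q hq hopt
  have hn' : (0 : ℝ) < n := Nat.cast_pos.2 hn
  wlog hqg : 0 ≤ ∑ i, q i * g i generalizing q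
  · refine (this (-q) (neg_mem_divisions hq) (isMaxOn_surplus_neg hopt (not_le.1 hqg).le) ?_).trans
      (advantage_neg_le_of_isMaxOn hq hopt)
    rw [sum_neg_mul]
    linarith
  rcases le_or_gt (∑ i, q i) (-(2 * δ * n)) with hsum | hsum
  · exact (mul_le_mul_of_nonneg_right (min_le_left _ _) hn'.le).trans
      (hunbalanced q hq hopt hqg hsum)
  refine (mul_le_mul_of_nonneg_right (min_le_right _ _) hn'.le).trans ?_
  have hs : κ * n ≤ surplus D q g := hrκ.trans (isMaxOn_iff.1 hopt r hr)
  have hsum' : ∑ i, q i < 2 * δ * n := by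
    by_contra! h
    linarith [hover q hq g h hqg, mul_pos hκ hn']
  have hadv := hbalanced q hq g (2 * δ) (abs_lt.2 ⟨hsum, hsum'⟩).le
  linarith [mul_le_mul_of_nonneg_right hδκ hn'.le]

end ManyGoods

section Payoffs

variable {n : ℕ} {q : Fin n → ℝ} {s : (Fin n → ℝ) → Fin n → ℝ}

lemma choPayoff_eq (q gD gC : Fin n → ℝ) :
    choPayoff q gD gC = (∑ i, gC i + |∑ i, q i * gC i|) / 2 := by
  unfold choPayoff
  rw [sum_one_add_div_two_mul, sum_one_sub_div_two_mul]
  split_ifs with h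
  · rcases h with h | h
    · rw [abs_of_pos h]
    · rw [h.1, abs_zero]
  · rw [abs_of_nonpos (not_lt.1 fun hpos => h (.inl hpos)), sub_eq_add_neg]

-- Equality fails only when an indifferent chooser breaks the tie in the divider's favor.
lemma le_divPayoff (q gD gC : Fin n → ℝ) :
    (∑ i, gD i + ∑ i, q i * gD i) / 2
      - {x : Fin n → ℝ | 0 < ∑ i, q i * x i}.indicator 1 gC * ∑ i, q i * gD i
      ≤ divPayoff q gD gC := by
  unfold divPayoff
  rw [sum_one_add_div_two_mul, sum_one_sub_div_two_mul]
  by_cases h : 0 < ∑ i, q i * gC i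
  · rw [if_pos (.inl h), Set.indicator_of_mem (by exact h), Pi.one_apply]
    linarith
  · rw [Set.indicator_of_notMem (by exact h)]
    split_ifs with hpick
    · linarith [(hpick.resolve_left h).2]
    · linarith

lemma abs_divPayoff_le (hq : q ∈ divisions n) (gD gC : Fin n → ℝ) :
    |divPayoff q gD gC| ≤ ∑ i, |gD i| := by
  unfold divPayoff
  split_ifs <;> refine abs_sum_mul_le_sum_abs fun i => ?_ <;> obtain ⟨h1, h2⟩ := hq i <;>
    exact abs_le.2 ⟨by linarith, by linarith⟩

lemma abs_choPayoff_le (hq : q ∈ divisions n) (gD gC : Fin n → ℝ) :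
    |choPayoff q gD gC| ≤ ∑ i, |gC i| := by
  unfold choPayoff
  split_ifs <;> refine abs_sum_mul_le_sum_abs fun i => ?_ <;> obtain ⟨h1, h2⟩ := hq i <;>
    exact abs_le.2 ⟨by linarith, by linarith⟩

lemma measurableSet_picksPile1 (hs : Measurable s) :
    MeasurableSet {z : (Fin n → ℝ) × (Fin n → ℝ) | picksPile1 (s z.1) z.1 z.2} := by
  have hC : Measurable fun z : (Fin n → ℝ) × (Fin n → ℝ) => ∑ i, s z.1 i * z.2 i := by fun_prop
  have hD : Measurable fun z : (Fin n → ℝ) × (Fin n → ℝ) => ∑ i, s z.1 i * z.1 i := by fun_prop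
  exact (measurableSet_lt measurable_const hC).union
    ((measurableSet_eq_fun hC measurable_const).inter (measurableSet_lt hD measurable_const))

lemma measurable_divPayoff (hs : Measurable s) :
    Measurable fun z : (Fin n → ℝ) × (Fin n → ℝ) => divPayoff (s z.1) z.1 z.2 := by
  unfold divPayoff
  exact Measurable.ite (measurableSet_picksPile1 hs) (by fun_prop) (by fun_prop)

lemma measurable_choPayoff (hs : Measurable s) :
    Measurable fun z : (Fin n → ℝ) × (Fin n → ℝ) => choPayoff (s z.1) z.1 z.2 := by
  unfold choPayoff
  exact Measurable.ite (measurableSet_picksPile1 hs) (by fun_prop) (by fun_prop)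

variable {D : Measure ℝ} [IsProbabilityMeasure D]

lemma integrable_divPayoff (hD : Integrable (fun y => y) D) (hs : Measurable s)
    (hsq : ∀ g, s g ∈ divisions n) :
    Integrable (fun z : (Fin n → ℝ) × (Fin n → ℝ) => divPayoff (s z.1) z.1 z.2)
      ((Measure.pi fun _ : Fin n => D).prod (Measure.pi fun _ : Fin n => D)) :=
  ((integrable_sum_eval hD.abs).comp_fst _).mono' (measurable_divPayoff hs).aestronglyMeasurable
    (ae_of_all _ fun z => abs_divPayoff_le (hsq z.1) z.1 z.2)

lemma integrable_choPayoff (hD : Integrable (fun y => y) D) (hs : Measurable s)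
    (hsq : ∀ g, s g ∈ divisions n) :
    Integrable (fun z : (Fin n → ℝ) × (Fin n → ℝ) => choPayoff (s z.1) z.1 z.2)
      ((Measure.pi fun _ : Fin n => D).prod (Measure.pi fun _ : Fin n => D)) :=
  ((integrable_sum_eval hD.abs).comp_snd _).mono' (measurable_choPayoff hs).aestronglyMeasurable
    (ae_of_all _ fun z => abs_choPayoff_le (hsq z.1) z.1 z.2)

lemma integral_choPayoff (hD : Integrable (fun y => y) D) (q gD : Fin n → ℝ) :
    ∫ gC, choPayoff q gD gC ∂(Measure.pi fun _ : Fin n => D)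
      = (n * ∫ y, y ∂D + ∫ x, |∑ i, q i * x i| ∂(Measure.pi fun _ : Fin n => D)) / 2 := by
  simp only [choPayoff_eq]
  rw [integral_div, integral_add (integrable_sum_eval hD) (integrable_sum_mul_eval hD q).abs,
    integral_sum_eval hD, Fintype.card_fin]

lemma le_integral_divPayoff (hq : q ∈ divisions n) (gD : Fin n → ℝ) :
    (∑ i, gD i + surplus D q gD) / 2
      ≤ ∫ gC, divPayoff q gD gC ∂(Measure.pi fun _ : Fin n => D) := by
  have hdiv : Integrable (divPayoff q gD) (Measure.pi fun _ : Fin n => D) :=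
    (integrable_const (∑ i, |gD i|)).mono'
      ((measurable_divPayoff (s := fun _ => q) measurable_const).comp
        measurable_prodMk_left).aestronglyMeasurable
      (ae_of_all _ fun gC => abs_divPayoff_le hq gD gC)
  have hind : Integrable ({x : Fin n → ℝ | 0 < ∑ i, q i * x i}.indicator (1 : (Fin n → ℝ) → ℝ))
      (Measure.pi fun _ : Fin n => D) :=
    (integrable_const 1).indicator (measurableSet_sum_mul_pos q)
  refine le_trans (le_of_eq ?_) (integral_mono
    ((integrable_const _).sub (hind.mul_const _)) hdiv fun gC => le_divPayoff q gD gC)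
  rw [integral_sub' (integrable_const _) (hind.mul_const _), integral_const, integral_mul_const,
    integral_indicator_one (measurableSet_sum_mul_pos q), probReal_univ, one_smul, surplus,
    chooseProb, Measure.real]
  ring

lemma advantage_le_two_mul_integral_sub (hD : Integrable (fun y => y) D) (hq : q ∈ divisions n)
    (gD : Fin n → ℝ) :
    advantage D q gD ≤ 2 * (∫ gC, divPayoff q gD gC ∂(Measure.pi fun _ : Fin n => D)
      - ∫ gC, choPayoff q gD gC ∂(Measure.pi fun _ : Fin n => D))
      - (∑ i, gD i - n * ∫ y, y ∂D) := by
  rw [advantage, integral_choPayoff hD]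
  linarith [le_integral_divPayoff (D := D) hq gD]

lemma sub_mul_measureReal_le_integral {Ω : Type*} {mΩ : MeasurableSpace Ω} {μ : Measure Ω}
    [IsProbabilityMeasure μ] {X : Ω → ℝ} (hX : Integrable X μ) {a b : ℝ} {B : Set Ω}
    (hb : ∀ ω, b ≤ X ω) (ha : ∀ ω ∉ B, a ≤ X ω) : a - (a - b) * μ.real B ≤ ∫ ω, X ω ∂μ := by
  have hB := measurableSet_toMeasurable μ B
  have hind : Integrable ((toMeasurable μ B).indicator fun _ => a - b) μ :=
    (integrable_const _).indicator hB
  calc a - (a - b) * μ.real B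
      = ∫ ω, (a - (toMeasurable μ B).indicator (fun _ => a - b) ω) ∂μ := by
        rw [integral_sub (integrable_const _) hind, integral_indicator_const _ hB, Measure.real,
          Measure.real, measure_toMeasurable]
        simp [mul_comm]
    _ ≤ ∫ ω, X ω ∂μ := integral_mono ((integrable_const _).sub hind) hX fun ω => by
        by_cases hω : ω ∈ toMeasurable μ B
        · simpa [hω] using hb ω
        · simpa [hω] using ha ω fun hωB => hω (subset_toMeasurable μ B hωB)

lemma integral_choPayoff_lt_integral_divPayoff (hD : Integrable (fun y => y) D) (hs : Measurable s)
    (hsq : ∀ g, s g ∈ divisions n) {a b : ℝ}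
    (hb : ∀ g, b ≤ advantage D (s g) g)
    (ha : (a - b) * (Measure.pi fun _ => D).real {g | advantage D (s g) g < a} < a) :
    ∫ gD, ∫ gC, choPayoff (s gD) gD gC
        ∂(Measure.pi fun _ : Fin n => D) ∂(Measure.pi fun _ : Fin n => D)
      < ∫ gD, ∫ gC, divPayoff (s gD) gD gC
        ∂(Measure.pi fun _ : Fin n => D) ∂(Measure.pi fun _ : Fin n => D) := by
  have hdiv := (integrable_divPayoff hD hs hsq).integral_prod_left
  have hcho := (integrable_choPayoff hD hs hsq).integral_prod_left
  have hdiff := (hdiv.sub hcho).const_mul 2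
  have hsum : Integrable (fun g : Fin n → ℝ => ∑ i, g i - n * ∫ y, y ∂D)
      (Measure.pi fun _ => D) := (integrable_sum_eval hD).sub (integrable_const _)
  have hle (g) := advantage_le_two_mul_integral_sub hD (hsq g) g
  have h := sub_mul_measureReal_le_integral (B := {g | advantage D (s g) g < a}) (hdiff.sub hsum)
    (fun g => (hb g).trans (hle g)) fun g hg => (not_lt.1 hg).trans (hle g)
  rw [integral_sub' hdiff hsum, integral_const_mul, integral_sub' hdiv hcho,
    integral_sub (integrable_sum_eval hD) (integrable_const _), integral_sum_eval hD] at h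
  simp only [Fintype.card_fin, integral_const, probReal_univ, one_smul, sub_self, sub_zero] at h
  linarith

end Payoffs

theorem divider_better_off_many_goods_general (D : Measure ℝ) [IsProbabilityMeasure D]
    (hD : Integrable (fun y => y) D) (hnonneg : ∀ᵐ y ∂D, 0 ≤ y) (htwo : ∀ c : ℝ, D {c} ≠ 1) :
    ∀ᶠ n : ℕ in atTop, ∀ s : (Fin n → ℝ) → (Fin n → ℝ), Measurable s →
      (∀ gD, s gD ∈ divisions n) →
      (∀ gD, ∀ q ∈ divisions n, divUtility D q gD ≤ divUtility D (s gD) gD) →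
      (∫ gD, ∫ gC, choPayoff (s gD) gD gC
          ∂(Measure.pi fun _ : Fin n => D) ∂(Measure.pi fun _ : Fin n => D)) <
      (∫ gD, ∫ gC, divPayoff (s gD) gD gC
          ∂(Measure.pi fun _ : Fin n => D) ∂(Measure.pi fun _ : Fin n => D)) := by
  have hm := integral_pos_of_nonneg hD hnonneg (htwo 0)
  obtain ⟨c, hc, htypical⟩ := exists_withHighProbability_le_advantage hD hnonneg htwo
  filter_upwards [htypical.eventually_lt_const (by positivity : 0 < c / (c + ∫ y, y ∂D)),
    eventually_gt_atTop 0] with n hprob hn s hs hsq hutility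
  have hn : (0 : ℝ) < n := Nat.cast_pos.2 hn
  have hopt (g : Fin n → ℝ) : IsMaxOn (surplus D · g) (divisions n) (s g) :=
    isMaxOn_iff.2 fun q hq => by
      have := hutility g q hq
      simp only [divUtility_eq_sum_add_surplus_div_two] at this
      linarith
  have hbad : (Measure.pi fun _ => D).real {g | advantage D (s g) g < c * n}
      < c / (c + ∫ y, y ∂D) := by
    refine lt_of_le_of_lt (measureReal_mono fun g hg => ?_) hprob
    exact fun hgood => not_le.2 hg (hgood _ (hsq g) (hopt g))
  refine integral_choPayoff_lt_integral_divPayoff hD hs hsq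
    (fun g => neg_le_advantage_of_isMaxOn hD hnonneg (hsq g) (hopt g)) (a := c * n) ?_
  rw [lt_div_iff₀ (by positivity)] at hbad
  linarith [mul_lt_mul_of_pos_right hbad hn]

/-- Let `D` be a probability distribution on `ℝ` whose support is bounded,
nonnegative, and contains at least two distinct values, and suppose the expectation `Mn n`
of the minimum of `n` i.i.d. draws from `D` is either bounded away from zero or vanishes
subexponentially.  Then for all sufficiently large `n`, in divide-and-choose with `n` goods
and all values i.i.d. from `D`, under any measurable divider strategy that maximizes his
expected utility pointwise, the divider is ex ante strictly better off: `E[u^C] < E[u^D]`. -/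
theorem divider_better_off_many_goods
    (D : Measure ℝ) [IsProbabilityMeasure D]
    (hbdd : ∃ b : ℝ, D {x | b < x} = 0)
    (hpos : D {x | x < 0} = 0)
    (htwo : ∀ c : ℝ, D {c} ≠ 1)
    (Mn : ℕ → ℝ)
    (hMn : ∀ n : ℕ, Mn (n + 1) =
      ∫ x : Fin (n + 1) → ℝ, (⨅ i, x i) ∂(Measure.pi fun _ : Fin (n + 1) => D))
    (hmin : (∃ c : ℝ, 0 < c ∧ ∀ n : ℕ, c ≤ Mn (n + 1)) ∨
      (∀ c : ℝ, 0 < c →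
        Filter.Tendsto (fun n : ℕ => Real.exp (c * n) * Mn (n + 1))
          Filter.atTop Filter.atTop)) :
    ∃ N : ℕ, ∀ n : ℕ, N ≤ n →
      ∀ s : (Fin n → ℝ) → (Fin n → ℝ), Measurable s →
        (∀ gD : Fin n → ℝ, ∀ i, s gD i ∈ Set.Icc (-1 : ℝ) 1) →
        (∀ gD q : Fin n → ℝ, (∀ i, q i ∈ Set.Icc (-1 : ℝ) 1) →
          divUtility D q gD ≤ divUtility D (s gD) gD) →
        (∫ gD, ∫ gC, choPayoff (s gD) gD gC
            ∂(Measure.pi fun _ : Fin n => D) ∂(Measure.pi fun _ : Fin n => D)) <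
        (∫ gD, ∫ gC, divPayoff (s gD) gD gC
            ∂(Measure.pi fun _ : Fin n => D) ∂(Measure.pi fun _ : Fin n => D)) := by
  obtain ⟨b, hb⟩ := hbdd
  have hnonneg : ∀ᵐ y ∂D, 0 ≤ y := ae_iff.2 (by simpa using hpos)
  have hle : ∀ᵐ y ∂D, y ≤ b := ae_iff.2 (by simpa using hb)
  have hD : Integrable (fun y => y) D :=
    Integrable.of_mem_Icc 0 b aemeasurable_id (hnonneg.and hle)
  exact eventually_atTop.1 (divider_better_off_many_goods_general D hD hnonneg htwo)
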